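/- arXiv:2107.00378 — 7 statements merged into one kernel-verified Lean document; each statement's English description precedes it below -/
import Mathlib

section
/- Let X be a positive real-valued random variable with continuous probability density function f, cumulative distribution function F satisfying F(x) < 1 for all x > 0, hazard rate function r(t) = f(t)/(1 − F(t)), and quantile function Q. Suppose X is long-tailed, E[X] < ∞, and both limits lim_{t→∞} r(t) and lim_{t→∞} t²·f(t) exist. Then there exists p ∈ (0,1) such that (1 − p)·Q(p) + ∫₀^p Q(u) du < p·E[X]. -/
open MeasureTheory Filter Set Topology ProbabilityTheory

theorem quantile_int (μ : Measure ℝ) [IsProbabilityMeasure μ] (F Q : ℝ → ℝ)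
    (hF : ∀ t, F t = μ.real (Iic t)) (hF0 : F 0 = 0)
    (hQ : ∀ p ∈ Set.Ioo (0:ℝ) 1, Q p = sInf {t : ℝ | p ≤ F t})
    (t : ℝ) (hp0 : 0 < F t) (hp1 : F t < 1) :
    Q (F t) ≤ t ∧ ∫ u in (0:ℝ)..(F t), Q u = ∫ x in Iic t, x ∂μ := by
  have hFc : F = cdf μ := by
    funext t; rw [hF, cdf_eq_real]
  have hmono : Monotone F := hFc ▸ (cdf μ).mono
  have key : ∀ u ∈ Ioo (0:ℝ) 1, ∀ s, Q u ≤ s ↔ u ≤ F s := by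
    intro u hu s
    have hbdd : BddBelow {t : ℝ | u ≤ F t} := by
      refine ⟨0, fun x hx => ?_⟩
      by_contra! h
      have := hmono h.le
      simp only [mem_ofPred_eq] at hx
      linarith [hu.1]
    rw [hQ u hu]
    constructor
    · intro h
      have hne : {t : ℝ | u ≤ F t}.Nonempty := by
        have := (tendsto_cdf_atTop μ).eventually (lt_mem_nhds hu.2)
        obtain ⟨x, hx⟩ := this.exists
        exact ⟨x, by rw [mem_ofPred_eq, hFc]; exact hx.le⟩
      have hgt : ∀ z > s, u ≤ F z := by
        intro z hz
        obtain ⟨w, hw, hwz⟩ := exists_lt_of_csInf_lt hne (lt_of_le_of_lt h hz)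
        exact le_trans hw (hmono hwz.le)
      have hc : Tendsto F (𝓝[>] s) (𝓝 (F s)) := by
        rw [hFc]
        exact ((cdf μ).right_continuous s).tendsto.mono_left (nhdsWithin_mono _ Ioi_subset_Ici_self)
      exact ge_of_tendsto hc (eventually_nhdsWithin_of_forall hgt)
    · intro h
      exact csInf_le hbdd h
  have hFt : F t ∈ Ioo (0:ℝ) 1 := ⟨hp0, hp1⟩
  refine ⟨(key _ hFt t).2 le_rfl, ?_⟩
  set Q' : ℝ → ℝ := (Ioo (0:ℝ) 1).indicator Q with hQ'
  have hpre : ∀ s, Q' ⁻¹' (Iic s) ∩ Ioo 0 1 = Ioo 0 1 ∩ Iic (F s) := by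
    intro s
    ext u
    simp only [mem_inter_iff, mem_preimage, mem_Iic]
    constructor
    · rintro ⟨h1, h2⟩
      rw [hQ', indicator_of_mem h2] at h1
      exact ⟨h2, (key u h2 s).1 h1⟩
    · rintro ⟨h2, h1⟩
      rw [hQ', indicator_of_mem h2]
      exact ⟨(key u h2 s).2 h1, h2⟩
  have hm : Measurable Q' := by
    refine measurable_of_Iic fun s => ?_
    have : Q' ⁻¹' (Iic s) = (Ioo 0 1 ∩ Iic (F s)) ∪ ({u | (0:ℝ) ≤ s} ∩ (Ioo 0 1)ᶜ) := by
      rw [← hpre s]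
      ext u
      by_cases hu : u ∈ Ioo (0:ℝ) 1
      · simp only [mem_union, mem_inter_iff, hu, mem_compl_iff, and_true, not_true, and_false, or_false]
      · simp only [mem_union, mem_inter_iff, hu, mem_compl_iff, and_true, not_false_iff, and_false, false_or, mem_preimage, hQ', indicator_of_notMem, mem_Iic, mem_ofPred_eq]
    rw [this]
    exact (measurableSet_Ioo.inter measurableSet_Iic).union
      ((MeasurableSet.const _).inter measurableSet_Ioo.compl)
  have hF01 : ∀ s, 0 ≤ F s ∧ F s ≤ 1 := fun s => by
    rw [hF]; exact ⟨measureReal_nonneg, measureReal_le_one⟩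
  have hmap : Measure.map Q' (volume.restrict (Ioo (0:ℝ) 1)) = μ := by
    have : IsFiniteMeasure (Measure.map Q' (volume.restrict (Ioo (0:ℝ) 1))) := inferInstance
    refine Measure.ext_of_Iic _ _ fun s => ?_
    rw [Measure.map_apply hm measurableSet_Iic, Measure.restrict_apply (hm measurableSet_Iic),
      hpre]
    have h1 : (Ioo (0:ℝ) 1 ∩ Iic (F s) : Set ℝ) =ᵐ[volume] (Ioc (0:ℝ) 1 ∩ Iic (F s) : Set ℝ) :=
      Ioo_ae_eq_Ioc.inter (ae_eq_refl _)
    rw [measure_congr h1, Ioc_inter_Iic, Real.volume_Ioc, min_eq_right (hF01 s).2, sub_zero, hF,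
      ofReal_measureReal]
  conv_rhs => rw [← hmap]
  rw [setIntegral_map (f := fun x : ℝ => x) measurableSet_Iic aestronglyMeasurable_id hm.aemeasurable,
    Measure.restrict_restrict (hm measurableSet_Iic), hpre,
    intervalIntegral.integral_of_le hp0.le]
  have h2 : (Ioo (0:ℝ) 1 ∩ Iic (F t) : Set ℝ) = Ioc 0 (F t) := by
    ext u
    simp only [mem_inter_iff, mem_Ioo, mem_Iic, mem_Ioc]
    constructor
    · rintro ⟨⟨a, b⟩, c⟩; exact ⟨a, c⟩
    · rintro ⟨a, c⟩; exact ⟨⟨a, by linarith⟩, c⟩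
  rw [h2]
  refine setIntegral_congr_fun measurableSet_Ioc fun u hu => ?_
  have : u ∈ Ioo (0:ℝ) 1 := ⟨hu.1, hu.2.trans_lt hp1⟩
  simp [hQ', indicator_of_mem this]

theorem stmt_0 {Ω : Type*} [MeasureSpace Ω] [IsProbabilityMeasure (ℙ : Measure Ω)]
    (X : Ω → ℝ) (hX : Measurable X) (hXpos : ∀ ω, 0 < X ω)
    (F : ℝ → ℝ) (hF : ∀ t, F t = (ℙ {ω | X ω ≤ t}).toReal)
    (f : ℝ → ℝ) (hf_nonneg : ∀ t ∈ Set.Ioi (0:ℝ), 0 ≤ f t)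
    (hf_int : IntegrableOn f (Set.Ioi (0:ℝ)))
    (hpdf : ∀ t, 0 ≤ t → F t = ∫ u in (0:ℝ)..t, f u)
    (hf_cont : ContinuousOn f (Set.Ioi (0:ℝ)))
    (hFlt1 : ∀ x > (0:ℝ), F x < 1)
    (r : ℝ → ℝ) (hr : ∀ t, r t = f t / (1 - F t))
    (Q : ℝ → ℝ) (hQ : ∀ p ∈ Set.Ioo (0:ℝ) 1, Q p = sInf {t : ℝ | p ≤ F t})
    (hlt_pos : ∀ x > (0:ℝ), 0 < (ℙ {ω | x < X ω}).toReal)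
    (hlt : ∀ y > (0:ℝ), Tendsto (fun x => (ℙ {ω | x + y < X ω}).toReal / (ℙ {ω | x < X ω}).toReal)
      atTop (𝓝 1))
    (hXint : Integrable X)
    (hr_lim : ∃ L : ℝ, Tendsto r atTop (𝓝 L))
    (hf_lim : ∃ L : ℝ, Tendsto (fun t => t ^ 2 * f t) atTop (𝓝 L)) :
    ∃ p ∈ Set.Ioo (0:ℝ) 1,
      (1 - p) * Q p + ∫ u in (0:ℝ)..p, Q u < p * ∫ ω, X ω := by
  have hprob : IsProbabilityMeasure (Measure.map X ℙ) := Measure.isProbabilityMeasure_map hX.aemeasurable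
  have hFm : ∀ t, F t = (Measure.map X ℙ).real (Iic t) := by
    intro t
    rw [hF, measureReal_def, Measure.map_apply hX measurableSet_Iic]; rfl
  have hF0 : F 0 = 0 := by simpa using hpdf 0 le_rfl
  have hE : 0 ≤ ∫ ω, X ω := integral_nonneg fun ω => (hXpos ω).le
  set E := ∫ ω, X ω with hEdef
  have hFtop : Tendsto F atTop (𝓝 1) := by
    have : F = cdf (Measure.map X ℙ) := by
      funext t; rw [hFm, cdf_eq_real]
    rw [this]; exact tendsto_cdf_atTop _
  have e1 := hFtop.eventually (lt_mem_nhds (show (0:ℝ) < 1 by norm_num))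
  have e2 := (hlt (2 * E + 1) (by linarith)).eventually (lt_mem_nhds (show (1/2:ℝ) < 1 by norm_num))
  obtain ⟨t, ⟨h1, h2⟩, ht⟩ := ((e1.and e2).and (eventually_gt_atTop 0)).exists
  have hlt1 := hFlt1 t ht
  obtain ⟨hq, hi⟩ := quantile_int (Measure.map X ℙ) F Q hFm hF0 hQ t h1 hlt1
  refine ⟨F t, ⟨h1, hlt1⟩, ?_⟩
  have hS : (ℙ {ω | t < X ω}).toReal = 1 - F t := by
    have : {ω | t < X ω} = {ω | X ω ≤ t}ᶜ := by ext ω; simp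
    rw [this, hF]
    exact probReal_compl_eq_one_sub (measurableSet_le hX measurable_const)
  rw [hS, lt_div_iff₀ (by linarith)] at h2
  have hA : MeasurableSet {ω | t < X ω} := measurableSet_lt measurable_const hX
  have hB : MeasurableSet {ω | t + (2 * E + 1) < X ω} := measurableSet_lt measurable_const hX
  rw [hi, setIntegral_map (f := fun x : ℝ => x) measurableSet_Iic aestronglyMeasurable_id hX.aemeasurable]
  have hsplit := integral_add_compl (hX measurableSet_Iic : MeasurableSet (X ⁻¹' Iic t)) hXint
  have hc : (X ⁻¹' Iic t)ᶜ = {ω | t < X ω} := by ext ω; simp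
  rw [hc, ← hEdef, ← integral_indicator hA] at hsplit
  have hlow : t * (1 - F t) + (2 * E + 1) * (ℙ {ω | t + (2 * E + 1) < X ω}).toReal
      ≤ ∫ ω, {ω | t < X ω}.indicator X ω := by
    have i1 : Integrable ({ω | t < X ω}.indicator (fun _ => t)) :=
      (integrable_const t).indicator hA
    have i2 : Integrable ({ω | t + (2 * E + 1) < X ω}.indicator (fun _ => 2 * E + 1)) :=
      (integrable_const _).indicator hB
    have : t * (1 - F t) + (2 * E + 1) * (ℙ {ω | t + (2 * E + 1) < X ω}).toReal
        = ∫ ω, ({ω | t < X ω}.indicator (fun _ => t) ω +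
          {ω | t + (2 * E + 1) < X ω}.indicator (fun _ => 2 * E + 1) ω) := by
      rw [integral_add i1 i2, integral_indicator_const _ hA, integral_indicator_const _ hB, ← hS]
      simp only [measureReal_def, smul_eq_mul]
      ring
    rw [this]
    refine integral_mono (i1.add i2) (hXint.indicator hA) fun ω => ?_
    simp only [indicator, mem_ofPred_eq]
    split_ifs <;> linarith
  have : (1 - F t) * Q (F t) ≤ (1 - F t) * t := mul_le_mul_of_nonneg_left hq (by linarith)
  nlinarith
end

section
/- Let X be a positive real-valued random variable with probability density function f, cumulative distribution function F satisfying F(x) < 1 for all x > 0, and hazard rate function r(t) = f(t)/(1 − F(t)). Assume the limit lim_{t→∞} r(t) exists. Then X is long-tailed if and only if lim_{t→∞} r(t) = 0. -/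
open MeasureTheory Filter Set Topology ProbabilityTheory

theorem stmt_2 {Ω : Type*} [MeasureSpace Ω] [IsProbabilityMeasure (ℙ : Measure Ω)]
    (X : Ω → ℝ) (hX : Measurable X) (hXpos : ∀ ω, 0 < X ω)
    (F : ℝ → ℝ) (hF : ∀ t, F t = (ℙ {ω | X ω ≤ t}).toReal)
    (f : ℝ → ℝ) (hf_nonneg : ∀ t ∈ Set.Ioi (0:ℝ), 0 ≤ f t)
    (hf_int : IntegrableOn f (Set.Ioi (0:ℝ)))
    (hpdf : ∀ t, 0 ≤ t → F t = ∫ u in (0:ℝ)..t, f u)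
    (hFlt1 : ∀ x > (0:ℝ), F x < 1)
    (r : ℝ → ℝ) (hr : ∀ t, r t = f t / (1 - F t))
    (hr_lim : ∃ L : ℝ, Tendsto r atTop (𝓝 L)) :
    ((∀ x > (0:ℝ), 0 < (ℙ {ω | x < X ω}).toReal) ∧
      ∀ y > (0:ℝ), Tendsto (fun x => (ℙ {ω | x + y < X ω}).toReal / (ℙ {ω | x < X ω}).toReal)
        atTop (𝓝 1)) ↔
    Tendsto r atTop (𝓝 0) := by
  have hG : ∀ t, (ℙ {ω | t < X ω}).toReal = 1 - F t := by
    intro t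
    have h1 : {ω | t < X ω} = {ω | X ω ≤ t}ᶜ := by
      ext ω; simp
    have hm : MeasurableSet {ω | X ω ≤ t} := measurableSet_le hX measurable_const
    have h2 := probReal_compl_eq_one_sub (μ := (ℙ : Measure Ω)) hm
    rw [h1, hF]
    exact h2
  simp only [hG]
  have hmono : Monotone F := by
    intro a b hab
    rw [hF, hF]
    exact ENNReal.toReal_mono (measure_ne_top _ _)
      (measure_mono (fun ω (h : X ω ≤ a) => h.trans hab))
  have hii : ∀ a b, 0 ≤ a → a ≤ b → IntervalIntegrable f volume a b := by
    intro a b ha hab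
    rw [intervalIntegrable_iff_integrableOn_Ioc_of_le hab]
    exact hf_int.mono_set (fun u hu => lt_of_le_of_lt ha hu.1)
  have hdiff : ∀ a b, 0 ≤ a → a ≤ b → F b - F a = ∫ u in a..b, f u := by
    intro a b ha hab
    rw [hpdf b (ha.trans hab), hpdf a ha,
      ← intervalIntegral.integral_add_adjacent_intervals (hii 0 a le_rfl ha) (hii a b ha hab)]
    ring
  have hfr : ∀ u, 0 < u → f u = r u * (1 - F u) := by
    intro u hu
    have := hFlt1 u hu
    rw [hr, div_mul_cancel₀ _ (by linarith)]
  have hconst : ∀ a b c : ℝ, ∫ _ in a..b, c = (b - a) * c := by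
    intro a b c; simp
  constructor
  · rintro ⟨-, h⟩
    obtain ⟨L, hL⟩ := hr_lim
    have hL0 : 0 ≤ L := by
      refine ge_of_tendsto hL ?_
      filter_upwards [eventually_gt_atTop 0] with u hu
      rw [hr]
      exact div_nonneg (hf_nonneg u hu) (by linarith [hFlt1 u hu])
    rcases hL0.eq_or_lt with h0 | h0
    · rw [h0]; exact hL
    exfalso
    have h1 := h 1 one_pos
    have hev : ∀ᶠ x in atTop, (1 - F (x + 1)) / (1 - F x) ≤ 1 / (1 + L / 2) := by
      obtain ⟨N, hN⟩ := eventually_atTop.1 (hL.eventually (lt_mem_nhds (half_lt_self h0)))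
      filter_upwards [eventually_ge_atTop N, eventually_gt_atTop 0] with x hxN hx
      have hb : ∫ _ in x..(x + 1), (L / 2 * (1 - F (x + 1))) ≤ ∫ u in x..(x + 1), f u := by
        refine intervalIntegral.integral_mono_on (by linarith) (by simp)
          (hii _ _ hx.le (by linarith)) ?_
        intro u hu
        rw [hfr u (hx.trans_le hu.1)]
        have h2 := hN u (hxN.trans hu.1)
        have h3 := hmono hu.2
        have h4 := hFlt1 (x + 1) (by linarith)
        exact mul_le_mul h2.le (by linarith) (by linarith) (by linarith)
      rw [hconst, ← hdiff x (x + 1) hx.le (by linarith)] at hb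
      rw [div_le_div_iff₀ (by linarith [hFlt1 x hx]) (by linarith)]
      linarith
    have h5 := le_of_tendsto h1 hev
    rw [le_div_iff₀ (by linarith)] at h5
    linarith
  · intro h
    refine ⟨fun x hx => by linarith [hFlt1 x hx], fun y hy => ?_⟩
    rw [Metric.tendsto_nhds]
    intro ε hε
    have hd : 0 < ε / (2 * y) := by positivity
    obtain ⟨N, hN⟩ := eventually_atTop.1 (h.eventually (gt_mem_nhds hd))
    filter_upwards [eventually_ge_atTop N, eventually_gt_atTop 0] with x hxN hx
    have hGx : 0 < 1 - F x := by linarith [hFlt1 x hx]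
    have hb : ∫ u in x..(x + y), f u ≤ ∫ _ in x..(x + y), (ε / (2 * y) * (1 - F x)) := by
      refine intervalIntegral.integral_mono_on (by linarith)
          (hii _ _ hx.le (by linarith)) (by simp) ?_
      intro u hu
      have hu0 := hx.trans_le hu.1
      rw [hfr u hu0]
      have h2 := hN u (hxN.trans hu.1)
      have h3 := hmono hu.1
      have h4 := hFlt1 u hu0
      exact mul_le_mul h2.le (by linarith) (by linarith) hd.le
    rw [hconst, ← hdiff x (x + y) hx.le (by linarith)] at hb
    have he : (x + y - x) * (ε / (2 * y) * (1 - F x)) = ε / 2 * (1 - F x) := by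
      field_simp; ring
    rw [he] at hb
    have hm := hmono (show x ≤ x + y by linarith)
    have hq : (1 - F (x + y)) / (1 - F x) - 1 = - ((F (x + y) - F x) / (1 - F x)) := by
      field_simp; ring
    rw [Real.dist_eq, hq, abs_neg, abs_of_nonneg (div_nonneg (by linarith) hGx.le),
      div_lt_iff₀ hGx]
    nlinarith
end

section
/- Let X be a positive real-valued random variable with continuous probability density function f that is strictly positive on (0,∞), cumulative distribution function F satisfying F(x) < 1 for all x > 0, and quantile function Q. If the limit lim_{t→∞} t²·f(t) exists, then lim_{p→1⁻} (1 − p)·Q(p) = lim_{t→∞} t²·f(t). -/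
open MeasureTheory Filter Set Topology ProbabilityTheory

theorem stmt_11 {Ω : Type*} [MeasureSpace Ω] [IsProbabilityMeasure (ℙ : Measure Ω)]
    (X : Ω → ℝ) (hX : Measurable X) (hXpos : ∀ ω, 0 < X ω)
    (F : ℝ → ℝ) (hF : ∀ t, F t = (ℙ {ω | X ω ≤ t}).toReal)
    (f : ℝ → ℝ) (hf_nonneg : ∀ t ∈ Set.Ioi (0:ℝ), 0 ≤ f t)
    (hf_int : IntegrableOn f (Set.Ioi (0:ℝ)))
    (hpdf : ∀ t, 0 ≤ t → F t = ∫ u in (0:ℝ)..t, f u)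
    (hf_cont : ContinuousOn f (Set.Ioi (0:ℝ)))
    (hf_pos : ∀ t ∈ Set.Ioi (0:ℝ), 0 < f t)
    (hFlt1 : ∀ x > (0:ℝ), F x < 1)
    (Q : ℝ → ℝ) (hQ : ∀ p ∈ Set.Ioo (0:ℝ) 1, Q p = sInf {t : ℝ | p ≤ F t})
    (L : ℝ) (hf_lim : Tendsto (fun t => t ^ 2 * f t) atTop (𝓝 L)) :
    Tendsto (fun p => (1 - p) * Q p) (𝓝[<] (1:ℝ)) (𝓝 L) := by
  have hmono : Monotone F := by
    intro a b hab
    rw [hF, hF]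
    exact ENNReal.toReal_mono (measure_ne_top _ _)
      (measure_mono (fun ω (h : X ω ≤ a) => h.trans hab))
  have hF0 : F 0 = 0 := by rw [hpdf 0 le_rfl]; simp
  have hlim : Tendsto F atTop (𝓝 1) := by
    have h := tendsto_measure_iUnion_atTop (μ := (ℙ : Measure Ω)) (s := fun t : ℝ => {ω | X ω ≤ t})
      (fun a b hab ω (h : X ω ≤ a) => le_trans h hab)
    have hU : (⋃ t : ℝ, {ω | X ω ≤ t}) = univ := by
      ext ω
      simp only [mem_iUnion, mem_setOf_eq, mem_univ, iff_true]
      exact ⟨X ω, le_rfl⟩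
    rw [hU, measure_univ] at h
    have h2 := (ENNReal.tendsto_toReal ENNReal.one_ne_top).comp h
    rw [ENNReal.toReal_one] at h2
    refine h2.congr fun t => ?_
    rw [hF]; rfl
  have hii : ∀ t, 0 ≤ t → IntervalIntegrable f volume 0 t := fun t ht =>
    (intervalIntegrable_iff_integrableOn_Ioc_of_le ht).2
      (hf_int.mono_set Ioc_subset_Ioi_self)
  have hder : ∀ t, 0 < t → HasDerivAt F (f t) t := by
    intro t ht
    have h := intervalIntegral.integral_hasDerivAt_right (hii t ht.le)
      (hf_cont.stronglyMeasurableAtFilter isOpen_Ioi t ht)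
      (hf_cont.continuousAt (Ioi_mem_nhds ht))
    refine h.congr_of_eventuallyEq ?_
    filter_upwards [Ioi_mem_nhds ht] with s hs
    exact hpdf s (le_of_lt hs)
  have hcont : ∀ b, 0 ≤ b → ContinuousOn F (Icc 0 b) := by
    intro b hb
    have h := intervalIntegral.continuousOn_primitive_interval (μ := volume) (f := f) (a := 0) (b := b)
      (by
        rw [uIcc_of_le hb, integrableOn_Icc_iff_integrableOn_Ioc]
        exact hf_int.mono_set Ioc_subset_Ioi_self)
    rw [uIcc_of_le hb] at h
    exact h.congr fun s hs => hpdf s hs.1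
  have hstrict : ∀ a b, 0 < a → a < b → F a < F b := by
    intro a b ha hab
    have h : StrictMonoOn F (Ici a) := by
      refine strictMonoOn_of_deriv_pos (convex_Ici a)
        (fun x hx => (hder x (ha.trans_le hx)).continuousAt.continuousWithinAt) ?_
      intro x hx
      rw [interior_Ici] at hx
      have hx0 : 0 < x := ha.trans hx
      rw [(hder x hx0).deriv]
      exact hf_pos x hx0
    exact h (le_refl a) hab.le hab
  have hQF : ∀ p ∈ Ioo (0:ℝ) 1, F (Q p) = p := by
    intro p hp
    obtain ⟨b, hbp, hb⟩ := ((hlim.eventually (lt_mem_nhds hp.2)).and (eventually_ge_atTop 0)).exists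
    obtain ⟨c, hc, hcp⟩ := intermediate_value_Icc hb (hcont b hb)
      (show p ∈ Icc (F 0) (F b) from ⟨by rw [hF0]; exact hp.1.le, hbp.le⟩)
    have hl : IsLeast {t : ℝ | p ≤ F t} c := by
      refine ⟨hcp.ge, fun t (ht : p ≤ F t) => ?_⟩
      by_contra! hlt
      have ht0 : 0 < t := by
        by_contra! h0
        have := hmono h0
        have := hp.1
        linarith
      have := hstrict t c ht0 hlt
      linarith
    rw [hQ p hp, hl.csInf_eq, hcp]
  have hIoo : ∀ᶠ p in 𝓝[<] (1:ℝ), p ∈ Ioo (0:ℝ) 1 := Ioo_mem_nhdsLT one_pos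
  have hQtop : Tendsto Q (𝓝[<] (1:ℝ)) atTop := by
    rw [tendsto_atTop]
    intro M
    have h1 : F (max M 1) < 1 := hFlt1 _ (lt_max_of_lt_right one_pos)
    filter_upwards [hIoo, Ioo_mem_nhdsLT h1] with p hp hp2
    by_contra! h
    have := hmono (h.le.trans (le_max_left M 1))
    rw [hQF p hp] at this
    exact absurd hp2.1 (not_lt.2 this)
  have hmain : Tendsto (fun t => (1 - F t) / t⁻¹) atTop (𝓝 L) := by
    refine HasDerivAt.lhopital_zero_atTop (f' := fun t => - f t) (g' := fun t => -(t^2)⁻¹)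
      ?_ ?_ ?_ ?_ tendsto_inv_atTop_zero ?_
    · filter_upwards [eventually_gt_atTop 0] with t ht
      exact (hder t ht).const_sub 1
    · filter_upwards [eventually_gt_atTop 0] with t ht
      exact hasDerivAt_inv ht.ne'
    · filter_upwards [eventually_gt_atTop 0] with t ht
      have : 0 < (t^2)⁻¹ := by positivity
      exact (neg_lt_zero.2 this).ne
    · simpa using hlim.const_sub 1
    · refine hf_lim.congr fun t => ?_
      rw [neg_div_neg_eq, div_inv_eq_mul, mul_comm]
  refine (hmain.comp hQtop).congr' ?_
  filter_upwards [hIoo] with p hp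
  simp only [Function.comp, hQF p hp, div_inv_eq_mul]
end

section
/- Let X be a positive real-valued random variable with continuous probability density function f that is strictly positive on (0,∞), cumulative distribution function F, quantile function Q, and 0 < E[X] < ∞. Then the following are equivalent: (i) there exists t > 0 with F(t) > 0 and ∫₀^t (1 − F(s)) ds < F(t)·E[X]; (ii) there exists p ∈ (0,1) with (1 − p)·Q(p) + ∫₀^p Q(u) du < p·E[X]. -/
open MeasureTheory Filter Set Topology ProbabilityTheory

theorem stmt_12 {Ω : Type*} [MeasureSpace Ω] [IsProbabilityMeasure (ℙ : Measure Ω)]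
    (X : Ω → ℝ) (hX : Measurable X) (hXpos : ∀ ω, 0 < X ω)
    (F : ℝ → ℝ) (hF : ∀ t, F t = (ℙ {ω | X ω ≤ t}).toReal)
    (f : ℝ → ℝ) (hf_nonneg : ∀ t ∈ Set.Ioi (0:ℝ), 0 ≤ f t)
    (hf_int : IntegrableOn f (Set.Ioi (0:ℝ)))
    (hpdf : ∀ t, 0 ≤ t → F t = ∫ u in (0:ℝ)..t, f u)
    (hf_cont : ContinuousOn f (Set.Ioi (0:ℝ)))
    (hf_pos : ∀ t ∈ Set.Ioi (0:ℝ), 0 < f t)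
    (Q : ℝ → ℝ) (hQ : ∀ p ∈ Set.Ioo (0:ℝ) 1, Q p = sInf {t : ℝ | p ≤ F t})
    (hXint : Integrable X)
    (hEpos : 0 < ∫ ω, X ω) :
    (∃ t > (0:ℝ), 0 < F t ∧ (∫ s in (0:ℝ)..t, (1 - F s)) < F t * ∫ ω, X ω) ↔
    (∃ p ∈ Set.Ioo (0:ℝ) 1,
      (1 - p) * Q p + ∫ u in (0:ℝ)..p, Q u < p * ∫ ω, X ω) := by
  have hmono : Monotone F := by
    intro a b hab
    rw [hF, hF]
    exact ENNReal.toReal_mono (measure_ne_top _ _)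
      (measure_mono fun ω (h : X ω ≤ a) => h.trans hab)
  have hle1 : ∀ t, F t ≤ 1 := fun t => by
    rw [hF]; exact ENNReal.toReal_le_of_le_ofReal zero_le_one (by simpa using prob_le_one)
  have hneg : ∀ t ≤ 0, F t = 0 := fun t ht => by
    have : {ω | X ω ≤ t} = ∅ := by
      ext ω; simp; linarith [hXpos ω]
    rw [hF, this]; simp
  have htend : Tendsto F atTop (𝓝 1) := by
    have : IsProbabilityMeasure (Measure.map X ℙ) := Measure.isProbabilityMeasure_map hX.aemeasurable
    have : F = fun t => cdf (Measure.map X ℙ) t := by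
      ext t
      rw [hF, cdf_eq_real, Measure.real, Measure.map_apply hX measurableSet_Iic]; rfl
    rw [this]
    exact tendsto_cdf_atTop _
  have hii : ∀ a b, 0 ≤ a → a ≤ b → IntervalIntegrable f volume a b := fun a b ha hab => by
    rw [intervalIntegrable_iff_integrableOn_Ioc_of_le hab]
    exact hf_int.mono_set fun x hx => lt_of_le_of_lt ha hx.1
  have hstrict : StrictMonoOn F (Ici 0) := by
    intro a ha b hb hab
    rw [hpdf a ha, hpdf b hb, ← intervalIntegral.integral_add_adjacent_intervals
      (hii 0 a le_rfl ha) (hii a b ha hab.le)]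
    have := intervalIntegral.intervalIntegral_pos_of_pos_on (hii a b ha hab.le)
      (fun x hx => hf_pos x (lt_of_le_of_lt ha hx.1)) hab
    linarith
  have hcont : ∀ b, 0 ≤ b → ContinuousOn F (Icc 0 b) := fun b hb => by
    have h1 : IntegrableOn f (uIcc 0 b) := by
      rw [uIcc_of_le hb, integrableOn_Icc_iff_integrableOn_Ioc]
      exact (intervalIntegrable_iff_integrableOn_Ioc_of_le hb).1 (hii 0 b le_rfl hb)
    have := intervalIntegral.continuousOn_primitive_interval h1
    rw [uIcc_of_le hb] at this
    exact this.congr fun x hx => hpdf x hx.1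
  have hsurj : ∀ p ∈ Ioo (0:ℝ) 1, ∃ x > 0, F x = p := by
    intro p hp
    obtain ⟨b, hb, hb0⟩ := ((htend.eventually (lt_mem_nhds hp.2)).and (eventually_gt_atTop 0)).exists
    obtain ⟨x, hx, rfl⟩ := intermediate_value_Ioo hb0.le (hcont b hb0.le)
      (show p ∈ Ioo (F 0) (F b) from ⟨by rw [hneg 0 le_rfl]; exact hp.1, hb⟩)
    exact ⟨x, hx.1, rfl⟩
  have hFpos : ∀ x > 0, F x ∈ Ioo (0:ℝ) 1 := fun x hx => by
    refine ⟨?_, ?_⟩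
    · rw [← hneg 0 le_rfl]; exact hstrict (by simp) (le_of_lt hx) hx
    · exact (hstrict (le_of_lt hx) (show x + 1 ∈ Ici 0 by simp; linarith)
        (by linarith)).trans_le (hle1 _)
  have hQF : ∀ x > 0, Q (F x) = x := fun x hx => by
    have : {t : ℝ | F x ≤ F t} = Ici x := by
      ext t
      refine ⟨fun h => ?_, fun h => hmono h⟩
      by_contra hlt
      simp only [mem_Ici, not_le] at hlt
      have h0 : 0 < t := by
        by_contra h0
        have h2 := (hFpos x hx).1
        have h3 : F x ≤ F t := h
        rw [hneg t (not_lt.1 h0)] at h3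
        linarith
      exact absurd h (not_le.2 (hstrict h0.le (le_of_lt hx) hlt))
    rw [hQ _ (hFpos x hx), this, csInf_Ici]
  have key : ∀ t > 0, ∫ u in (0:ℝ)..F t, Q u = ∫ s in (0:ℝ)..t, (F t - F s) := by
    intro t ht
    have hp := hFpos t ht
    have hQb : ∀ u ∈ Ioo 0 (F t), 0 ≤ Q u ∧ Q u ≤ t := by
      intro u hu
      obtain ⟨x, hx, rfl⟩ := hsurj u ⟨hu.1, hu.2.trans hp.2⟩
      rw [hQF x hx]
      exact ⟨le_of_lt hx, ((hstrict.lt_iff_lt (le_of_lt hx) ht.le).1 hu.2).le⟩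
    have hQm : MonotoneOn Q (Ioo 0 (F t)) := by
      intro u hu v hv huv
      obtain ⟨x, hx, rfl⟩ := hsurj u ⟨hu.1, hu.2.trans hp.2⟩
      obtain ⟨y, hy, rfl⟩ := hsurj v ⟨hv.1, hv.2.trans hp.2⟩
      rw [hQF x hx, hQF y hy]
      exact (hstrict.le_iff_le (le_of_lt hx) (le_of_lt hy)).1 huv
    have hQi : IntegrableOn Q (Ioo 0 (F t)) := by
      refine Integrable.of_bound (C := t)
        (aemeasurable_restrict_of_monotoneOn measurableSet_Ioo hQm).aestronglyMeasurable ?_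
      filter_upwards [ae_restrict_mem measurableSet_Ioo] with u hu
      rw [Real.norm_of_nonneg (hQb u hu).1]; exact (hQb u hu).2
    rw [intervalIntegral.integral_of_le hp.1.le, integral_Ioc_eq_integral_Ioo,
      Integrable.integral_eq_integral_meas_lt hQi
        (by filter_upwards [ae_restrict_mem measurableSet_Ioo] with u hu using (hQb u hu).1),
      intervalIntegral.integral_of_le ht.le]
    have hval : ∀ s ∈ Ioi (0:ℝ), (volume.restrict (Ioo 0 (F t))).real {a | s < Q a}
        = (Ioc 0 t).indicator (fun s => F t - F s) s := by
      intro s hs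
      have hs0 : s ∈ Ici (0:ℝ) := mem_Ici.2 (mem_Ioi.1 hs).le
      have hset : {a | s < Q a} ∩ Ioo 0 (F t) = Ioo (F s) (F t) := by
        ext u
        constructor
        · rintro ⟨h1, h2⟩
          obtain ⟨x, hx, rfl⟩ := hsurj u ⟨h2.1, h2.2.trans hp.2⟩
          simp only [mem_ofPred_eq, hQF x hx] at h1
          exact ⟨hstrict hs0 (le_of_lt hx) h1, h2.2⟩
        · rintro ⟨h1, h2⟩
          have h0 : 0 < u := (hFpos s hs).1.trans h1
          obtain ⟨x, hx, rfl⟩ := hsurj u ⟨h0, h2.trans hp.2⟩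
          refine ⟨?_, h0, h2⟩
          simp only [mem_ofPred_eq, hQF x hx]
          exact (hstrict.lt_iff_lt hs0 (le_of_lt hx)).1 h1
      rw [Measure.real, Measure.restrict_apply' measurableSet_Ioo, hset, Real.volume_Ioo]
      by_cases hst : s ≤ t
      · rw [indicator_of_mem (show s ∈ Ioc 0 t from ⟨hs, hst⟩),
          ENNReal.toReal_ofReal (by linarith [hmono hst])]
      · rw [indicator_of_notMem (fun h => hst h.2), ENNReal.ofReal_of_nonpos
          (by linarith [hmono (not_le.1 hst).le])]
        rfl
    rw [setIntegral_congr_fun measurableSet_Ioi hval, setIntegral_indicator measurableSet_Ioc,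
      inter_eq_self_of_subset_right (fun x hx => hx.1)]
  have key2 : ∀ t > 0, (1 - F t) * Q (F t) + ∫ u in (0:ℝ)..F t, Q u
      = ∫ s in (0:ℝ)..t, (1 - F s) := by
    intro t ht
    have hFi : IntervalIntegrable F volume 0 t := hmono.intervalIntegrable
    rw [hQF t ht, key t ht, intervalIntegral.integral_sub (by simp) hFi,
      intervalIntegral.integral_sub (by simp) hFi]
    simp
    ring
  constructor
  · rintro ⟨t, ht, -, h⟩
    exact ⟨F t, hFpos t ht, by rw [key2 t ht]; exact h⟩
  · rintro ⟨p, hp, h⟩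
    obtain ⟨t, ht, rfl⟩ := hsurj p hp
    exact ⟨t, ht, hp.1, by rw [← key2 t ht]; exact h⟩
end

section
/- Let X be a positive real-valued random variable with continuous probability density function f that is strictly positive on (0,∞), cumulative distribution function F satisfying F(x) < 1 for all x > 0, and hazard rate function r(t) = f(t)/(1 − F(t)). Suppose X is long-tailed, 0 < E[X] < ∞, and both limits lim_{t→∞} r(t) and lim_{t→∞} t²·f(t) exist. Then there exists t > 0 with F(t) > 0 and ∫₀^t (1 − F(s)) ds < F(t)·E[X]; that is, restarts are useful for X. -/
open MeasureTheory Filter Set Topology ProbabilityTheory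

theorem stmt_13 {Ω : Type*} [MeasureSpace Ω] [IsProbabilityMeasure (ℙ : Measure Ω)]
    (X : Ω → ℝ) (hX : Measurable X) (hXpos : ∀ ω, 0 < X ω)
    (F : ℝ → ℝ) (hF : ∀ t, F t = (ℙ {ω | X ω ≤ t}).toReal)
    (f : ℝ → ℝ) (hf_nonneg : ∀ t ∈ Set.Ioi (0:ℝ), 0 ≤ f t)
    (hf_int : IntegrableOn f (Set.Ioi (0:ℝ)))
    (hpdf : ∀ t, 0 ≤ t → F t = ∫ u in (0:ℝ)..t, f u)
    (hf_cont : ContinuousOn f (Set.Ioi (0:ℝ)))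
    (hf_pos : ∀ t ∈ Set.Ioi (0:ℝ), 0 < f t)
    (hFlt1 : ∀ x > (0:ℝ), F x < 1)
    (r : ℝ → ℝ) (hr : ∀ t, r t = f t / (1 - F t))
    (hlt_pos : ∀ x > (0:ℝ), 0 < (ℙ {ω | x < X ω}).toReal)
    (hlt : ∀ y > (0:ℝ), Tendsto (fun x => (ℙ {ω | x + y < X ω}).toReal / (ℙ {ω | x < X ω}).toReal)
      atTop (𝓝 1))
    (hXint : Integrable X)
    (hEpos : 0 < ∫ ω, X ω)
    (hr_lim : ∃ L : ℝ, Tendsto r atTop (𝓝 L))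
    (hf_lim : ∃ L : ℝ, Tendsto (fun t => t ^ 2 * f t) atTop (𝓝 L)) :
    ∃ t > (0:ℝ), 0 < F t ∧ (∫ s in (0:ℝ)..t, (1 - F s)) < F t * ∫ ω, X ω := by
  set E := ∫ ω, X ω with hE
  let S : ℝ → ℝ := fun t => (ℙ {ω | t < X ω}).toReal
  have hS : ∀ t, 1 - F t = S t := by
    intro t
    have h1 : {ω | t < X ω} = {ω | X ω ≤ t}ᶜ := by ext ω; simp
    have h2 := probReal_compl_eq_one_sub (μ := (ℙ : Measure Ω)) (measurableSet_le hX (measurable_const (a := t)))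
    simp only [S, h1, hF]
    exact h2.symm
  have hanti : Antitone S := by
    intro a b hab
    exact ENNReal.toReal_mono (measure_ne_top _ _)
      (measure_mono (fun ω (h : b < X ω) => lt_of_le_of_lt hab h))
  have hlayer : E = ∫ t in Set.Ioi (0:ℝ), S t :=
    hXint.integral_eq_integral_meas_lt (Eventually.of_forall fun ω => (hXpos ω).le)
  have hSint : IntegrableOn S (Set.Ioi (0:ℝ)) := by
    by_contra h
    rw [integral_undef h] at hlayer
    linarith
  have hev := (hlt (2 * E) (by linarith)).eventually (lt_mem_nhds (show (1/2:ℝ) < 1 by norm_num))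
  obtain ⟨t, ht, ht0⟩ := (hev.and (eventually_gt_atTop (0:ℝ))).exists
  have hSt : 0 < S t := hlt_pos t ht0
  have hhalf : S t < 2 * S (t + 2 * E) := by
    have : (1/2:ℝ) < S (t + 2 * E) / S t := ht
    rw [lt_div_iff₀ hSt] at this
    linarith
  have hii : ∀ a b, IntervalIntegrable S volume a b := fun a b => hanti.intervalIntegrable
  refine ⟨t, ht0, ?_, ?_⟩
  · rw [hpdf t ht0.le]
    refine intervalIntegral.intervalIntegral_pos_of_pos_on ?_ (fun x hx => hf_pos x hx.1) ht0
    rw [intervalIntegrable_iff_integrableOn_Ioc_of_le ht0.le]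
    exact hf_int.mono_set Set.Ioc_subset_Ioi_self
  · have hFt : F t = 1 - S t := by rw [← hS]; ring
    simp only [hS]
    rw [hFt]
    have h1 : (∫ s in (0:ℝ)..t, S s) + (∫ s in t..(t + 2 * E), S s) ≤ E := by
      rw [intervalIntegral.integral_add_adjacent_intervals (hii _ _) (hii _ _), hlayer,
        intervalIntegral.integral_of_le (by linarith)]
      exact setIntegral_mono_set hSint (Eventually.of_forall fun _ => ENNReal.toReal_nonneg)
        (Eventually.of_forall Set.Ioc_subset_Ioi_self)
    have h2 : 2 * E * S (t + 2 * E) ≤ ∫ s in t..(t + 2 * E), S s := by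
      have := intervalIntegral.integral_mono_on (a := t) (b := t + 2 * E) (μ := volume)
        (f := fun _ => S (t + 2 * E)) (g := S) (by linarith) (by simp) (hii _ _)
        (fun x hx => hanti hx.2)
      simpa using this
    nlinarith
end

section
/- Let Z be a standard normally distributed real random variable, and let σ > 0, γ ≥ 0, μ ∈ ℝ. Then the three-parameter lognormal random variable X = γ + exp(μ + σ·Z) is long-tailed; that is, P(X > x) > 0 for every x > 0 and, for every y > 0, lim_{x→∞} P(X > x+y)/P(X > x) = 1. -/
open MeasureTheory Filter Set Topology ProbabilityTheory

lemma aux_real (a b : ℝ) : (gaussianReal 0 1).real (Ioc a b)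
    = ∫ x in Ioc a b, gaussianPDFReal 0 1 x := by
  rw [measureReal_def, gaussianReal_apply_eq_integral 0 one_ne_zero, ENNReal.toReal_ofReal]
  exact integral_nonneg (fun x => gaussianPDFReal_nonneg _ _ _)

lemma aux_anti {a b : ℝ} (ha : 0 ≤ a) (hab : a ≤ b) :
    gaussianPDFReal 0 1 b ≤ gaussianPDFReal 0 1 a := by
  simp only [gaussianPDFReal_def]
  gcongr

lemma aux_const (a b c : ℝ) (hab : a ≤ b) : ∫ _ in Ioc a b, c = c * (b - a) := by
  rw [setIntegral_const, measureReal_def, Real.volume_Ioc, ENNReal.toReal_ofReal (by linarith)]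
  simp [mul_comm]

lemma aux_up {a b : ℝ} (ha : 0 ≤ a) (hab : a ≤ b) :
    (gaussianReal 0 1).real (Ioc a b) ≤ gaussianPDFReal 0 1 a * (b - a) := by
  rw [aux_real, ← aux_const a b _ hab]
  refine setIntegral_mono_on (integrable_gaussianPDFReal 0 1).integrableOn
    (integrableOn_const (by simp)) measurableSet_Ioc ?_
  intro x hx
  exact aux_anti ha hx.1.le

lemma aux_low {a b : ℝ} (ha : 0 ≤ a) (hab : a ≤ b) :
    gaussianPDFReal 0 1 b * (b - a) ≤ (gaussianReal 0 1).real (Ioc a b) := by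
  rw [aux_real, ← aux_const a b _ hab]
  refine setIntegral_mono_on (integrableOn_const (by simp))
    (integrable_gaussianPDFReal 0 1).integrableOn measurableSet_Ioc ?_
  intro x hx
  exact aux_anti (ha.trans hx.1.le) hx.2

lemma aux_pos (a : ℝ) : 0 < (gaussianReal 0 1).real (Ioi a) := by
  have h := aux_low (le_max_right a 0) (by linarith : max a 0 ≤ max a 0 + 1)
  have h2 : (gaussianReal 0 1).real (Ioc (max a 0) (max a 0 + 1))
      ≤ (gaussianReal 0 1).real (Ioi a) :=
    measureReal_mono (fun x hx => lt_of_le_of_lt (le_max_left a 0) hx.1)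
  have h3 := gaussianPDFReal_pos 0 1 (max a 0 + 1) one_ne_zero
  nlinarith

lemma aux_tail {a : ℝ} (ha : 1 ≤ a) :
    gaussianPDFReal 0 1 a * Real.exp (-(3/2)) / a ≤ (gaussianReal 0 1).real (Ioi a) := by
  have ha0 : 0 < a := by linarith
  have hi : 0 < 1 / a := by positivity
  have h := aux_low ha0.le (by linarith : a ≤ a + 1 / a)
  have h2 : (gaussianReal 0 1).real (Ioc a (a + 1 / a)) ≤ (gaussianReal 0 1).real (Ioi a) :=
    measureReal_mono (fun x hx => hx.1)
  refine le_trans ?_ (h.trans h2)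
  have h3 : gaussianPDFReal 0 1 a * Real.exp (-(3/2)) ≤ gaussianPDFReal 0 1 (a + 1 / a) := by
    simp only [gaussianPDFReal_def]
    rw [mul_assoc, ← Real.exp_add]
    gcongr
    have h4 : 1 / a ≤ 1 := by rw [div_le_one ha0]; exact ha
    have h5 : a * (1 / a) = 1 := by field_simp
    simp only [NNReal.coe_one]
    nlinarith
  have : a + 1 / a - a = 1 / a := by ring
  rw [this, div_eq_mul_one_div]
  gcongr

lemma aux_ratio {a b : ℝ} (ha : 1 ≤ a) (hab : a ≤ b) :
    1 - Real.exp (3/2) * (a * (b - a)) ≤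
      (gaussianReal 0 1).real (Ioi b) / (gaussianReal 0 1).real (Ioi a) := by
  have ha0 : 0 < a := by linarith
  have hsum : (gaussianReal 0 1).real (Ioi a)
      = (gaussianReal 0 1).real (Ioc a b) + (gaussianReal 0 1).real (Ioi b) := by
    have hdis : Disjoint (Ioc a b) (Ioi b) :=
      Set.disjoint_left.2 fun x hx hx' => not_lt.2 hx.2 hx'
    rw [← measureReal_union hdis measurableSet_Ioi, Ioc_union_Ioi_eq_Ioi hab]
  have h1 := aux_up ha0.le hab
  have h2 := aux_tail ha
  have h0 := aux_pos a
  rw [le_div_iff₀ h0]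
  have h3 : gaussianPDFReal 0 1 a ≤ Real.exp (3/2) * a * (gaussianReal 0 1).real (Ioi a) := by
    rw [div_le_iff₀ ha0, Real.exp_neg, ← div_eq_mul_inv, div_le_iff₀ (Real.exp_pos _)] at h2
    linarith
  have h4 := mul_le_mul_of_nonneg_right h3 (sub_nonneg.2 hab)
  linarith

theorem stmt_14 {Ω : Type*} [MeasureSpace Ω] [IsProbabilityMeasure (ℙ : Measure Ω)]
    (Z : Ω → ℝ) (hZ : Measurable Z)
    (hZlaw : Measure.map Z ℙ = gaussianReal 0 1)
    (σ : ℝ) (hσ : 0 < σ) (γ : ℝ) (hγ : 0 ≤ γ) (μ : ℝ)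
    (X : Ω → ℝ) (hXdef : ∀ ω, X ω = γ + Real.exp (μ + σ * Z ω)) :
    (∀ x > (0:ℝ), 0 < (ℙ {ω | x < X ω}).toReal) ∧
      ∀ y > (0:ℝ), Tendsto (fun x => (ℙ {ω | x + y < X ω}).toReal / (ℙ {ω | x < X ω}).toReal)
        atTop (𝓝 1) := by
  have key : ∀ x, γ < x → (ℙ {ω | x < X ω}).toReal
      = (gaussianReal 0 1).real (Ioi ((Real.log (x - γ) - μ) / σ)) := by
    intro x hx
    rw [← hZlaw, measureReal_def, Measure.map_apply hZ measurableSet_Ioi]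
    congr 2
    ext ω
    simp only [mem_ofPred_eq, mem_preimage, mem_Ioi, hXdef]
    rw [div_lt_iff₀ hσ, sub_lt_iff_lt_add, Real.log_lt_iff_lt_exp (by linarith),
      sub_lt_iff_lt_add']
    ring_nf
  refine ⟨fun x _ => ?_, fun y hy => ?_⟩
  · have h1 := aux_pos ((Real.log (max x (γ + 1) - γ) - μ) / σ)
    rw [← key _ (lt_of_lt_of_le (by linarith) (le_max_right x (γ + 1)))] at h1
    refine lt_of_lt_of_le h1 (ENNReal.toReal_mono (measure_ne_top _ _) (measure_mono ?_))
    intro ω hω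
    simp only [mem_ofPred_eq] at hω ⊢
    exact lt_of_le_of_lt (le_max_left _ _) hω
  · have hs : Tendsto (fun x : ℝ => x - γ) atTop atTop :=
      tendsto_atTop_add_const_right _ (-γ) tendsto_id
    have ha : Tendsto (fun x : ℝ => (Real.log (x - γ) - μ) / σ) atTop atTop :=
      (tendsto_atTop_add_const_right _ (-μ) (Real.tendsto_log_atTop.comp hs)).atTop_div_const hσ
    have hlim0 : Tendsto (fun s : ℝ => (Real.log s - μ) / s) atTop (𝓝 0) := by
      have e1 : Tendsto (fun s : ℝ => Real.log s / s) atTop (𝓝 0) :=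
        Real.isLittleO_log_id_atTop.tendsto_div_nhds_zero
      have e2 : Tendsto (fun s : ℝ => μ / s) atTop (𝓝 0) :=
        tendsto_const_nhds.div_atTop tendsto_id
      simpa [sub_div] using e1.sub e2
    have hlim : Tendsto (fun x : ℝ => 1 - Real.exp (3/2) * (y / σ ^ 2 *
        ((Real.log (x - γ) - μ) / (x - γ)))) atTop (𝓝 1) := by
      have := (((hlim0.comp hs).const_mul (y / σ ^ 2)).const_mul (Real.exp (3/2))).const_sub 1
      simpa using this
    refine tendsto_of_tendsto_of_tendsto_of_le_of_le' hlim tendsto_const_nhds ?_ ?_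
    · filter_upwards [ha.eventually_ge_atTop 1, eventually_gt_atTop γ] with x hx1 hx2
      rw [key x hx2, key (x + y) (by linarith)]
      have hsp : 0 < x - γ := by linarith
      have hll : Real.log (x + y - γ) - Real.log (x - γ) ≤ y / (x - γ) := by
        rw [← Real.log_div (by linarith) hsp.ne']
        refine (Real.log_le_sub_one_of_pos (div_pos (by linarith) hsp)).trans (le_of_eq ?_)
        field_simp
        ring
      have hle : (Real.log (x - γ) - μ) / σ ≤ (Real.log (x + y - γ) - μ) / σ := by
        have := Real.log_le_log hsp (by linarith : x - γ ≤ x + y - γ)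
        gcongr
      refine le_trans ?_ (aux_ratio hx1 hle)
      have hd : (Real.log (x + y - γ) - μ) / σ - (Real.log (x - γ) - μ) / σ
          ≤ y / (x - γ) / σ := by
        rw [← sub_div]
        gcongr
        linarith
      have h6 := mul_le_mul_of_nonneg_left hd (zero_le_one.trans hx1)
      have h7 : (Real.log (x - γ) - μ) / σ * (y / (x - γ) / σ)
          = y / σ ^ 2 * ((Real.log (x - γ) - μ) / (x - γ)) := by
        field_simp
      rw [h7] at h6
      have h8 := mul_le_mul_of_nonneg_left h6 (Real.exp_pos (3/2)).le
      linarith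
    · filter_upwards with x
      refine div_le_one_of_le₀ (ENNReal.toReal_mono (measure_ne_top _ _) (measure_mono ?_))
        ENNReal.toReal_nonneg
      intro ω hω
      simp only [mem_ofPred_eq] at hω ⊢
      linarith
end

section
/- Let X be a positive real-valued random variable with continuous probability density function f that is strictly positive on (0,∞), cumulative distribution function F satisfying F(x) < 1 for all x > 0, hazard rate function r(t) = f(t)/(1 − F(t)), and quantile function Q. Suppose X is long-tailed and the limit lim_{t→∞} r(t) exists. Then lim_{p→1⁻} (1 − p)/f(Q(p)) = ∞. -/
open MeasureTheory Filter Set Topology ProbabilityTheory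

theorem stmt_16 {Ω : Type*} [MeasureSpace Ω] [IsProbabilityMeasure (ℙ : Measure Ω)]
    (X : Ω → ℝ) (hX : Measurable X) (hXpos : ∀ ω, 0 < X ω)
    (F : ℝ → ℝ) (hF : ∀ t, F t = (ℙ {ω | X ω ≤ t}).toReal)
    (f : ℝ → ℝ) (hf_nonneg : ∀ t ∈ Set.Ioi (0:ℝ), 0 ≤ f t)
    (hf_int : IntegrableOn f (Set.Ioi (0:ℝ)))
    (hpdf : ∀ t, 0 ≤ t → F t = ∫ u in (0:ℝ)..t, f u)
    (hf_cont : ContinuousOn f (Set.Ioi (0:ℝ)))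
    (hf_pos : ∀ t ∈ Set.Ioi (0:ℝ), 0 < f t)
    (hFlt1 : ∀ x > (0:ℝ), F x < 1)
    (r : ℝ → ℝ) (hr : ∀ t, r t = f t / (1 - F t))
    (Q : ℝ → ℝ) (hQ : ∀ p ∈ Set.Ioo (0:ℝ) 1, Q p = sInf {t : ℝ | p ≤ F t})
    (hlt_pos : ∀ x > (0:ℝ), 0 < (ℙ {ω | x < X ω}).toReal)
    (hlt : ∀ y > (0:ℝ), Tendsto (fun x => (ℙ {ω | x + y < X ω}).toReal / (ℙ {ω | x < X ω}).toReal)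
      atTop (𝓝 1))
    (hr_lim : ∃ L : ℝ, Tendsto r atTop (𝓝 L)) :
    Tendsto (fun p => (1 - p) / f (Q p)) (𝓝[<] (1:ℝ)) atTop := by
  have hii : ∀ a b : ℝ, 0 ≤ a → a ≤ b → IntervalIntegrable f volume a b := by
    intro a b ha hab
    rw [intervalIntegrable_iff_integrableOn_Ioc_of_le hab]
    exact hf_int.mono_set (fun x hx => lt_of_le_of_lt ha hx.1)
  have hdiff : ∀ a b : ℝ, 0 ≤ a → a ≤ b → F b - F a = ∫ u in a..b, f u := by
    intro a b ha hab
    rw [hpdf b (ha.trans hab), hpdf a ha]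
    exact intervalIntegral.integral_interval_sub_left (hii 0 b le_rfl (ha.trans hab))
      (hii 0 a le_rfl ha)
  have hstrict : ∀ a b : ℝ, 0 ≤ a → a < b → F a < F b := by
    intro a b ha hab
    have h1 := hdiff a b ha hab.le
    have h2 : 0 < ∫ u in a..b, f u :=
      intervalIntegral.intervalIntegral_pos_of_pos_on (hii a b ha hab.le)
        (fun x hx => hf_pos x (lt_of_le_of_lt ha hx.1)) hab
    linarith
  have hS : ∀ x, (ℙ {ω | x < X ω}).toReal = 1 - F x := by
    intro x
    have hm : MeasurableSet {ω | X ω ≤ x} := measurableSet_le hX measurable_const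
    have h := probReal_compl_eq_one_sub (μ := (ℙ : Measure Ω)) hm
    have he : {ω | X ω ≤ x}ᶜ = {ω | x < X ω} := by ext ω; simp
    rw [he] at h
    rw [hF x]; exact h
  have hF0 : ∀ t, t ≤ 0 → F t = 0 := by
    intro t ht
    have he : {ω | X ω ≤ t} = ∅ := by
      ext ω
      have := hXpos ω
      simp only [mem_setOf_eq, mem_empty_iff_false, iff_false, not_le]
      linarith
    rw [hF t, he]; simp
  have hmono : Monotone F := by
    intro a b hab
    rw [hF a, hF b]
    exact measureReal_mono (μ := (ℙ : Measure Ω)) (fun ω (h : X ω ≤ a) => h.trans hab)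
  have hFtop : Tendsto F atTop (𝓝 1) := by
    have : IsProbabilityMeasure ((ℙ : Measure Ω).map X) :=
      Measure.isProbabilityMeasure_map hX.aemeasurable
    have h := tendsto_cdf_atTop ((ℙ : Measure Ω).map X)
    refine h.congr (fun t => ?_)
    rw [cdf_eq_real, hF t, Measure.real, Measure.map_apply hX measurableSet_Iic]
    rfl
  have hex : ∀ p ∈ Set.Ioo (0:ℝ) 1, 0 < Q p ∧ F (Q p) = p := by
    intro p hp
    obtain ⟨T, hT, hT0⟩ := ((hFtop.eventually (lt_mem_nhds hp.2)).and
      (eventually_ge_atTop (0:ℝ))).exists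
    have hc : ContinuousOn F (Icc 0 T) := by
      have h := intervalIntegral.continuousOn_primitive_interval (μ := volume) (f := f)
        (a := 0) (b := T) (by
          rw [uIcc_of_le hT0, integrableOn_Icc_iff_integrableOn_Ioc]
          exact hf_int.mono_set (fun x hx => hx.1))
      rw [uIcc_of_le hT0] at h
      exact h.congr (fun t ht => hpdf t ht.1)
    have hF00 := hF0 0 le_rfl
    obtain ⟨t, ht, htp⟩ := intermediate_value_Icc hT0 hc
      (show p ∈ Icc (F 0) (F T) from ⟨by rw [hF00]; exact hp.1.le, hT.le⟩)
    have htpos : 0 < t := by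
      rcases ht.1.lt_or_eq with h | h
      · exact h
      · rw [← h, hF00] at htp; linarith [hp.1]
    have hset : {t : ℝ | p ≤ F t} = Ici t := by
      ext s
      simp only [mem_setOf_eq, mem_Ici]
      constructor
      · intro hs
        by_contra hlt'
        push Not at hlt'
        rcases le_or_gt s 0 with h0 | h0
        · rw [hF0 s h0] at hs; linarith [hp.1]
        · have := hstrict s t h0.le hlt'
          linarith
      · intro hs
        rw [← htp]; exact hmono hs
    have hq : Q p = t := by rw [hQ p hp, hset, csInf_Ici]
    rw [hq]; exact ⟨htpos, htp⟩
  have hp01 : ∀ᶠ p in 𝓝[<] (1:ℝ), p ∈ Set.Ioo (0:ℝ) 1 := Ioo_mem_nhdsLT zero_lt_one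
  have hQtop : Tendsto Q (𝓝[<] (1:ℝ)) atTop := by
    rw [tendsto_atTop]
    intro M
    have hM : F (max M 1) < 1 := hFlt1 _ (lt_of_lt_of_le one_pos (le_max_right _ _))
    filter_upwards [hp01, Ioo_mem_nhdsLT hM] with p hp hp2
    by_contra hlt'
    push Not at hlt'
    have h1 := hmono (hlt'.le.trans (le_max_left M 1))
    rw [(hex p hp).2] at h1
    linarith [hp2.1]
  have hrpos : ∀ t, 0 < t → 0 < r t := by
    intro t ht
    rw [hr]
    exact div_pos (hf_pos t ht) (by linarith [hFlt1 t ht])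
  obtain ⟨L, hL⟩ := hr_lim
  have hL0 : L = 0 := by
    have hLn : 0 ≤ L := ge_of_tendsto hL
      ((eventually_gt_atTop 0).mono (fun t ht => (hrpos t ht).le))
    by_contra hne
    have hLp : 0 < L := lt_of_le_of_ne hLn (Ne.symm hne)
    obtain ⟨T, hT⟩ := eventually_atTop.1 (hL.eventually (lt_mem_nhds (half_lt_self hLp)))
    have hle : (1:ℝ) ≤ 1 / (1 + L / 2) := by
      refine le_of_tendsto (hlt 1 one_pos) ?_
      filter_upwards [eventually_gt_atTop 0, eventually_ge_atTop T] with x hx hxT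
      rw [hS, hS]
      have hx1 := hFlt1 x hx
      have hx2 := hFlt1 (x + 1) (by linarith)
      have hb : (∫ _ in x..(x+1), L / 2 * (1 - F (x + 1))) ≤ ∫ u in x..(x+1), f u := by
        refine intervalIntegral.integral_mono_on (by linarith) (by simp)
          (hii x (x+1) hx.le (by linarith)) ?_
        intro u hu
        have hu1 := hFlt1 u (by linarith [hu.1])
        have h1 := hT u (hxT.trans hu.1)
        rw [hr, lt_div_iff₀ (by linarith)] at h1
        have h2 := hmono hu.2
        nlinarith
      rw [← hdiff x (x+1) hx.le (by linarith)] at hb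
      simp only [intervalIntegral.integral_const, smul_eq_mul, add_sub_cancel_left, one_mul] at hb
      rw [div_le_div_iff₀ (by linarith) (by linarith)]
      nlinarith
    rw [le_div_iff₀ (by linarith)] at hle
    linarith
  subst hL0
  have h0 : Tendsto (fun p => r (Q p)) (𝓝[<] (1:ℝ)) (𝓝[>] 0) := by
    refine tendsto_nhdsWithin_iff.2 ⟨hL.comp hQtop, ?_⟩
    filter_upwards [hp01] with p hp
    exact hrpos _ (hex p hp).1
  refine (tendsto_inv_nhdsGT_zero.comp h0).congr' ?_
  filter_upwards [hp01] with p hp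
  simp only [Function.comp]
  rw [hr, (hex p hp).2, inv_div]
end
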